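/- Let $n\ge 1$ and let $G$ be a chordal simple graph on vertex set $\{1,\dots,n\}$, i.e., every cycle of $G$ of length at least $4$ has a chord. Let $\mathcal{M}_G$ be the set of real symmetric positive definite $n\times n$ matrices $K$ with $K_{ij}=0$ whenever $i\ne j$ and $ij$ is not an edge of $G$, and let $\mathrm{MLT}(G)$ be the smallest positive integer $d$ such that for Lebesgue-almost every real $n\times d$ matrix $X$, the function $K\mapsto \operatorname{tr}(XX^{T}K)-\log\det K$ attains a minimum on $\mathcal{M}_G$. Then $\mathrm{MLT}(G)$ equals the clique number of $G$ (the largest size of a set of pairwise adjacent vertices of $G$). -/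

import Mathlib

open MeasureTheory Matrix

/-- The objective function `K ↦ tr(S K) − log det K` of Gaussian maximum likelihood,
where `S` is the sample covariance matrix. -/
noncomputable def mlObjective {n : ℕ} (S K : Matrix (Fin n) (Fin n) ℝ) : ℝ :=
  (S * K).trace - Real.log K.det

/-- The maximum likelihood threshold of a set `M` of positive definite matrices:
the smallest positive integer `d` such that for Lebesgue-almost every real `n × d`
matrix `X`, the function `K ↦ tr(X Xᵀ K) − log det K` attains a minimum on `M`.
(It is `0` if there is no such `d`.) -/
noncomputable def mlt (n : ℕ) (M : Set (Matrix (Fin n) (Fin n) ℝ)) : ℕ :=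
  sInf {d : ℕ | 0 < d ∧
    ∀ᵐ X : Fin n → Fin d → ℝ ∂volume,
      ∃ K ∈ M, ∀ K' ∈ M,
        mlObjective (Matrix.of X * (Matrix.of X)ᵀ) K ≤
          mlObjective (Matrix.of X * (Matrix.of X)ᵀ) K'}

/-- The Gaussian graphical model of a graph `G` on `n` vertices: all symmetric positive
definite matrices whose off-diagonal entries vanish at non-edges of `G`. -/
def graphModel (n : ℕ) (G : SimpleGraph (Fin n)) : Set (Matrix (Fin n) (Fin n) ℝ) :=
  {K | K.PosDef ∧ ∀ i j, i ≠ j → ¬ G.Adj i j → K i j = 0}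

/-- A graph is chordal if every cycle of length at least four has a chord: an edge of
the graph between two vertices of the cycle that is not an edge of the cycle. -/
def IsChordal {V : Type*} (G : SimpleGraph V) : Prop :=
  ∀ (v : V) (c : G.Walk v v), c.IsCycle → 4 ≤ c.length →
    ∃ i j, i ∈ c.support ∧ j ∈ c.support ∧ G.Adj i j ∧ s(i, j) ∉ c.edges

namespace SimpleGraph

variable {V : Type*} {G : SimpleGraph V}

/-- The graph with the same vertices as `G` whose edges are the edges of `G` inside `T`. -/
def restrictTo (G : SimpleGraph V) (T : Set V) : SimpleGraph V where
  Adj a b := G.Adj a b ∧ a ∈ T ∧ b ∈ T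
  symm := ⟨fun _ _ h => ⟨h.1.symm, h.2.2, h.2.1⟩⟩
  loopless := ⟨fun _ h => h.1.ne rfl⟩

lemma restrictTo_le (T : Set V) : G.restrictTo T ≤ G := fun _ _ h => h.1

lemma restrictTo_mono {T T' : Set V} (h : T ⊆ T') : G.restrictTo T ≤ G.restrictTo T' :=
  fun _ _ hab => ⟨hab.1, h hab.2.1, h hab.2.2⟩

lemma Walk.support_subset_of_restrictTo {T : Set V} {x y : V} (p : (G.restrictTo T).Walk x y)
    (hx : x ∈ T) : ∀ z ∈ p.support, z ∈ T := by
  induction p with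
  | nil => simpa using hx
  | cons h p ih =>
    intro z hz
    rw [Walk.support_cons, List.mem_cons] at hz
    rcases hz with rfl | hz
    · exact hx
    · exact ih h.2.2 z hz

lemma Reachable.mem_of_restrictTo {T : Set V} {x y : V} (h : (G.restrictTo T).Reachable x y)
    (hx : x ∈ T) : y ∈ T := by
  obtain ⟨p⟩ := h
  exact p.support_subset_of_restrictTo hx y p.end_mem_support

/-- Geodesics have no chords. -/
lemma Walk.mem_edges_of_length_eq_dist {x y : V} (p : G.Walk x y) (hp : p.length = G.dist x y)
    {i j : V} (hi : i ∈ p.support) (hj : j ∈ p.support) (hij : G.Adj i j) :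
    s(i, j) ∈ p.edges := by
  obtain ⟨a, rfl, ha⟩ := Walk.mem_support_iff_exists_getVert.1 hi
  obtain ⟨b, rfl, hb⟩ := Walk.mem_support_iff_exists_getVert.1 hj
  have key : ∀ a b, a ≤ p.length → b ≤ p.length → a < b →
      G.Adj (p.getVert a) (p.getVert b) → s(p.getVert a, p.getVert b) ∈ p.edges := by
    intro a b ha hb hab h
    have h1 := G.dist_le ((p.take a).append (Walk.cons h (p.drop b)))
    rw [← hp] at h1
    simp only [Walk.length_append, Walk.length_cons, Walk.take_length, Walk.drop_length] at h1
    have : b = a + 1 := by omega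
    subst this
    exact (Walk.mk_mem_edges_iff_exists _).2 ⟨a, by omega, rfl⟩
  rcases lt_trichotomy a b with h | h | h
  · exact key a b ha hb h hij
  · subst h; exact absurd rfl hij.ne
  · rw [Sym2.eq_swap]; exact key b a hb ha h hij.symm

/-- In a chordal graph, two neighbours of `u` which are joined through non-neighbours of `u`
are adjacent. -/
lemma _root_.IsChordal.adj_of_reachable (hG : IsChordal G) {u x y : V} {T : Set V}
    (huT : u ∉ T) (hT : ∀ t ∈ T, ¬ G.Adj u t) (hx : G.Adj u x) (hy : G.Adj u y) (hxy : x ≠ y)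
    (hr : (G.restrictTo (insert x (insert y T))).Reachable x y) : G.Adj x y := by
  by_contra hnadj
  set H := G.restrictTo (insert x (insert y T))
  obtain ⟨p, hp⟩ := hr.exists_walk_length_eq_dist
  have hpath := p.isPath_of_length_eq_dist hp
  have hlen : 1 < p.length := by
    rw [hp]; exact hr.one_lt_dist_of_ne_of_not_adj hxy fun h => hnadj h.1
  have hsupp : ∀ z ∈ p.support, z = x ∨ z = y ∨ z ∈ T := fun z hz => by
    simpa using p.support_subset_of_restrictTo (by simp) z hz
  have hu : u ∉ p.support := fun h => by
    rcases hsupp u h with rfl | rfl | h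
    · exact hx.ne rfl
    · exact hy.ne rfl
    · exact huT h
  have hle : H ≤ G := restrictTo_le _
  let q := p.mapLe hle
  have hqs : q.support = p.support := by simp [q]
  have hqe : q.edges = p.edges := by simp [q]
  have hq : q.IsPath := hpath.mapLe hle
  have hqu : u ∉ q.support := hqs ▸ hu
  obtain ⟨i, j, hi, hj, hij, hne⟩ := hG u (Walk.cons hx (q.concat hy.symm))
    ((Walk.cons_isCycle_iff _ _).2 ⟨hq.concat hqu hy.symm, by
      rw [Walk.edges_concat, List.concat_eq_append, List.mem_append, List.mem_singleton, Sym2.eq_iff]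
      rintro (h | ⟨h, -⟩ | ⟨-, h⟩)
      · exact hqu (q.fst_mem_support_of_mem_edges h)
      · exact hy.ne h
      · exact hxy h⟩)
    (by simp [q]; omega)
  have hmem : ∀ i, i ∈ (Walk.cons hx (q.concat hy.symm)).support → i = u ∨ i ∈ p.support := by
    intro i hi
    simp [Walk.support_concat, hqs] at hi
    tauto
  have hed : ∀ e, e ∉ (Walk.cons hx (q.concat hy.symm)).edges →
      e ≠ s(u, x) ∧ e ∉ p.edges ∧ e ≠ s(y, u) := by
    intro e he
    simpa [Walk.edges_concat, hqe] using he
  obtain ⟨h1, h2, h3⟩ := hed _ hne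
  have hnb : ∀ z ∈ p.support, G.Adj u z → s(u, z) = s(u, x) ∨ s(u, z) = s(y, u) := by
    intro z hz hadj
    rcases hsupp z hz with rfl | rfl | h
    · exact .inl rfl
    · exact .inr Sym2.eq_swap
    · exact absurd hadj (hT z h)
  rcases hmem i hi with rfl | hi' <;> rcases hmem j hj with rfl | hj'
  · exact hij.ne rfl
  · rcases hnb j hj' hij with h | h
    exacts [h1 h, h3 h]
  · rw [Sym2.eq_swap] at h1 h3
    rcases hnb i hi' hij.symm with h | h
    exacts [h1 h, h3 h]
  · exact h2 (p.mem_edges_of_length_eq_dist hp hi' hj'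
      ⟨hij, by simpa using hsupp i hi', by simpa using hsupp j hj'⟩)

/-- `v` is simplicial in the subgraph of `G` induced on `s`: its neighbours in `s` form a
clique. -/
def IsSimplicialIn (G : SimpleGraph V) (s : Finset V) (v : V) : Prop :=
  ∀ x ∈ s, ∀ y ∈ s, G.Adj v x → G.Adj v y → x ≠ y → G.Adj x y

/-- A vertex set in which every non-universal vertex misses some simplicial vertex has a
simplicial vertex. -/
lemma exists_isSimplicialIn_of_nonuniversal {s : Finset V} (hs : s.Nonempty)
    (h : ∀ u ∈ s, (∃ w ∈ s, w ≠ u ∧ ¬ G.Adj u w) →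
      ∃ w ∈ s, w ≠ u ∧ ¬ G.Adj u w ∧ G.IsSimplicialIn s w) :
    ∃ v ∈ s, G.IsSimplicialIn s v := by
  by_cases hc : ∀ u ∈ s, ∀ w ∈ s, w ≠ u → G.Adj u w
  · obtain ⟨v, hv⟩ := hs
    exact ⟨v, hv, fun x hx y hy _ _ hne => hc x hx y hy hne.symm⟩
  · push Not at hc
    obtain ⟨u, hu, w, hw, hwu, hn⟩ := hc
    obtain ⟨v, hv, -, -, hsv⟩ := h u hu ⟨w, hw, hwu, hn⟩
    exact ⟨v, hv, hsv⟩

/-- In a chordal graph, every vertex which is not adjacent to all others misses some simplicial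
vertex. -/
lemma _root_.IsChordal.exists_isSimplicialIn_not_adj (hG : IsChordal G) (s : Finset V) :
    ∀ u ∈ s, (∃ w ∈ s, w ≠ u ∧ ¬ G.Adj u w) →
      ∃ w ∈ s, w ≠ u ∧ ¬ G.Adj u w ∧ G.IsSimplicialIn s w := by
  classical
  induction s using Finset.strongInduction with
  | H s ih =>
  rintro u hu ⟨w₀, hw₀, hw₀u, hw₀n⟩
  let T : Set V := {t | t ∈ s ∧ t ≠ u ∧ ¬ G.Adj u t}
  have hw₀T : w₀ ∈ T := ⟨hw₀, hw₀u, hw₀n⟩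
  let C : Finset V := s.filter fun t => (G.restrictTo T).Reachable w₀ t
  let A : Finset V := s.filter fun t => G.Adj u t ∧ ∃ c ∈ C, G.Adj t c
  have hCT : ∀ c ∈ C, c ∈ T := fun c hc => (Finset.mem_filter.1 hc).2.mem_of_restrictTo hw₀T
  have hCs : C ⊆ s := Finset.filter_subset _ _
  have hAs : A ⊆ s := Finset.filter_subset _ _
  have hw₀C : w₀ ∈ C := Finset.mem_filter.2 ⟨hw₀, Reachable.refl _⟩
  have hnbr : ∀ c ∈ C, ∀ t ∈ s, G.Adj c t → t ∈ C ∪ A := by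
    intro c hc t ht hct
    have hcT := hCT c hc
    by_cases hut : G.Adj u t
    · exact Finset.mem_union_right _ (Finset.mem_filter.2 ⟨ht, hut, c, hc, hct.symm⟩)
    · have htu : t ≠ u := by
        rintro rfl
        exact hcT.2.2 hct.symm
      refine Finset.mem_union_left _ (Finset.mem_filter.2 ⟨ht, ?_⟩)
      refine (Finset.mem_filter.1 hc).2.trans (Adj.reachable ?_)
      exact ⟨hct, hcT, ht, htu, hut⟩
  have hAclique : ∀ x ∈ A, ∀ y ∈ A, x ≠ y → G.Adj x y := by
    intro x hx y hy hxy
    obtain ⟨-, hux, c, hc, hxc⟩ := Finset.mem_filter.1 hx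
    obtain ⟨-, huy, c', hc', hyc'⟩ := Finset.mem_filter.1 hy
    refine hG.adj_of_reachable (T := T) (fun h => h.2.1 rfl) (fun t ht => ht.2.2) hux huy hxy ?_
    have h1 : (G.restrictTo (insert x (insert y T))).Reachable c c' :=
      ((Finset.mem_filter.1 hc).2.symm.trans (Finset.mem_filter.1 hc').2).mono
        (restrictTo_mono fun t ht => by simp [ht])
    have h2 : (G.restrictTo (insert x (insert y T))).Adj x c :=
      ⟨hxc, by simp, by simp [hCT c hc]⟩
    have h3 : (G.restrictTo (insert x (insert y T))).Adj c' y :=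
      ⟨hyc'.symm, by simp [hCT c' hc'], by simp⟩
    exact h2.reachable.trans (h1.trans h3.reachable)
  have huC : u ∉ C := fun h => (hCT u h).2.1 rfl
  have huA : u ∉ A := fun h => (Finset.mem_filter.1 h).2.1.ne rfl
  have hCAs : C ∪ A ⊂ s :=
    (Finset.ssubset_iff_of_subset (Finset.union_subset hCs hAs)).2 ⟨u, hu, by simp [huC, huA]⟩
  suffices ∃ w ∈ C, G.IsSimplicialIn (C ∪ A) w by
    obtain ⟨w, hw, hsw⟩ := this
    exact ⟨w, hCs hw, (hCT w hw).2.1, (hCT w hw).2.2, fun x hx y hy hwx hwy =>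
      hsw x (hnbr w hw x hx hwx) y (hnbr w hw y hy hwy) hwx hwy⟩
  by_cases hA : ∀ a ∈ A, ∀ c ∈ C, G.Adj a c
  · have hCs' : C ⊂ s := (Finset.ssubset_iff_of_subset hCs).2 ⟨u, hu, huC⟩
    obtain ⟨w, hw, hsw⟩ := exists_isSimplicialIn_of_nonuniversal ⟨w₀, hw₀C⟩ (ih C hCs')
    refine ⟨w, hw, fun x hx y hy hwx hwy hne => ?_⟩
    rcases Finset.mem_union.1 hx with hx | hx <;> rcases Finset.mem_union.1 hy with hy | hy
    · exact hsw x hx y hy hwx hwy hne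
    · exact (hA y hy x hx).symm
    · exact hA x hx y hy
    · exact hAclique x hx y hy hne
  · push Not at hA
    obtain ⟨a, ha, c, hc, hac⟩ := hA
    have hca : c ≠ a := by
      rintro rfl
      exact (hCT c hc).2.2 (Finset.mem_filter.1 ha).2.1
    obtain ⟨w, hw, hwa, hnw, hsw⟩ := ih (C ∪ A) hCAs a (Finset.mem_union_right _ ha)
      ⟨c, Finset.mem_union_left _ hc, hca, hac⟩
    refine ⟨w, ?_, hsw⟩
    rcases Finset.mem_union.1 hw with hw | hw
    · exact hw
    · exact absurd (hAclique a ha w hw hwa.symm) hnw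

/-- Every nonempty vertex set of a chordal graph has a simplicial vertex. -/
theorem _root_.IsChordal.exists_isSimplicialIn (hG : IsChordal G) {s : Finset V}
    (hs : s.Nonempty) : ∃ v ∈ s, G.IsSimplicialIn s v :=
  exists_isSimplicialIn_of_nonuniversal hs (hG.exists_isSimplicialIn_not_adj s)

end SimpleGraph

section Pivot

variable {m : Type*} [Fintype m] [DecidableEq m]

/-- The matrix which sends the basis vector `e v` to `√d • a` and fixes the others. -/
noncomputable def pivotMatrix (v : m) (d : ℝ) (a : m → ℝ) : Matrix m m ℝ :=
  1 + vecMulVec (√d • a - Pi.single v 1) (Pi.single v 1)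

lemma det_pivotMatrix {v : m} {d : ℝ} {a : m → ℝ} (ha : a v = 1) :
    (pivotMatrix v d a).det = √d := by
  rw [pivotMatrix, vecMulVec_eq Unit, det_one_add_replicateCol_mul_replicateRow]
  simp [ha]

lemma pivotMatrix_mul_mul_transpose {v : m} {d : ℝ} (hd : 0 ≤ d) (a : m → ℝ) {K : Matrix m m ℝ}
    (hrow : K v = Pi.single v 1) (hcol : Kᵀ v = Pi.single v 1) :
    pivotMatrix v d a * K * (pivotMatrix v d a)ᵀ =
      K - vecMulVec (Pi.single v 1) (Pi.single v 1) + d • vecMulVec a a := by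
  have h1 : Pi.single v 1 ᵥ* K = Pi.single v 1 := by simpa [Matrix.row] using hrow
  have h2 : K *ᵥ Pi.single v 1 = Pi.single v 1 := by simpa [Matrix.col] using hcol
  have h3 : d = √d * √d := (Real.mul_self_sqrt hd).symm
  set e : m → ℝ := Pi.single v 1 with he
  have h4 : e ⬝ᵥ e = 1 := by simp [he]
  have h5 : d • vecMulVec a a = vecMulVec (√d • a) (√d • a) := by
    ext i j
    simp only [Matrix.smul_apply, vecMulVec_apply, Pi.smul_apply, smul_eq_mul]
    linear_combination a i * a j * h3
  rw [h5, pivotMatrix, ← he, transpose_add, transpose_one, transpose_vecMulVec]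
  rw [add_mul, one_mul, vecMulVec_mul, h1, mul_add, mul_one, add_mul, mul_vecMulVec, h2,
    vecMulVec_mul_vecMulVec, h4]
  ext i j
  simp only [Matrix.add_apply, Matrix.sub_apply, vecMulVec_apply, Pi.sub_apply,
    Pi.smul_apply, smul_eq_mul]
  ring

variable {v : m} {d : ℝ} {a : m → ℝ} {K : Matrix m m ℝ}

lemma posDef_pivot_iff (hd : 0 < d) (ha : a v = 1)
    (hrow : K v = Pi.single v 1) (hcol : Kᵀ v = Pi.single v 1) :
    (K - vecMulVec (Pi.single v 1) (Pi.single v 1) + d • vecMulVec a a).PosDef ↔ K.PosDef := by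
  have hU : IsUnit (pivotMatrix v d a) := by
    rw [Matrix.isUnit_iff_isUnit_det, det_pivotMatrix ha]
    exact (Real.sqrt_pos.2 hd).ne'.isUnit
  rw [← pivotMatrix_mul_mul_transpose hd.le a hrow hcol,
    ← conjTranspose_eq_transpose_of_trivial, ← star_eq_conjTranspose,
    hU.posDef_star_right_conjugate_iff]

lemma det_pivot (hd : 0 ≤ d) (ha : a v = 1)
    (hrow : K v = Pi.single v 1) (hcol : Kᵀ v = Pi.single v 1) :
    (K - vecMulVec (Pi.single v 1) (Pi.single v 1) + d • vecMulVec a a).det = d * K.det := by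
  rw [← pivotMatrix_mul_mul_transpose hd a hrow hcol, det_mul, det_mul, det_transpose,
    det_pivotMatrix ha]
  linear_combination K.det * Real.mul_self_sqrt hd

end Pivot

section Minimiser

variable {n : ℕ} {G : SimpleGraph (Fin n)} {S : Matrix (Fin n) (Fin n) ℝ}

lemma trace_mul_vecMulVec_self (S : Matrix (Fin n) (Fin n) ℝ) (a : Fin n → ℝ) :
    (S * vecMulVec a a).trace = a ⬝ᵥ S *ᵥ a := by
  rw [mul_vecMulVec, trace_vecMulVec, dotProduct_comm]

lemma mlObjective_pivot {v : Fin n} {d : ℝ} {a : Fin n → ℝ} {K : Matrix (Fin n) (Fin n) ℝ}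
    (hd : 0 < d) (ha : a v = 1) (hK : K.PosDef)
    (hrow : K v = Pi.single v 1) (hcol : Kᵀ v = Pi.single v 1) :
    mlObjective S (K - vecMulVec (Pi.single v 1) (Pi.single v 1) + d • vecMulVec a a) =
      mlObjective S K - S v v + (d * (a ⬝ᵥ S *ᵥ a) - Real.log d) := by
  rw [mlObjective, mlObjective, det_pivot hd.le ha hrow hcol,
    Real.log_mul hd.ne' hK.det_pos.ne', mul_add, mul_sub, trace_add, trace_sub, mul_smul_comm,
    trace_smul, trace_mul_vecMulVec_self, trace_mul_vecMulVec_self]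
  simp
  ring

/-- The matrices of the graphical model which agree with the identity outside `s × s`. -/
def graphModelOn (G : SimpleGraph (Fin n)) (s : Finset (Fin n)) :
    Set (Matrix (Fin n) (Fin n) ℝ) :=
  {K | K ∈ graphModel n G ∧ ∀ i ∉ s, K i = Pi.single i 1}

lemma Matrix.PosDef.apply_comm {K : Matrix (Fin n) (Fin n) ℝ} (hK : K.PosDef) (i j : Fin n) :
    K i j = K j i := by
  simpa using hK.isHermitian.apply j i

/-- The vectors supported on `v` and its neighbours in `s` with coefficient one at `v`. -/
def pivotVectors (G : SimpleGraph (Fin n)) (s : Finset (Fin n)) (v : Fin n) : Set (Fin n → ℝ) :=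
  {a | a v = 1 ∧ ∀ i, i ≠ v → a i ≠ 0 → i ∈ s ∧ G.Adj v i}

/-- Eliminating a simplicial vertex does not create fill-in. -/
lemma exists_pivot_decomposition {s : Finset (Fin n)} {v : Fin n}
    (hsv : G.IsSimplicialIn s v) {K : Matrix (Fin n) (Fin n) ℝ} (hK : K ∈ graphModelOn G s) :
    ∃ K₀ ∈ graphModelOn G (s.erase v), ∃ d > (0 : ℝ), ∃ a ∈ pivotVectors G s v,
      K = K₀ - vecMulVec (Pi.single v 1) (Pi.single v 1) + d • vecMulVec a a := by
  obtain ⟨⟨hpd, hzero⟩, hs⟩ := hK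
  have hd : 0 < K v v := hpd.diag_pos
  have hsym := hpd.apply_comm
  set d := K v v
  let a : Fin n → ℝ := fun i => K i v / d
  have hav : a v = 1 := div_self hd.ne'
  have ha : a ∈ pivotVectors G s v := by
    refine ⟨hav, fun i hi hai => ?_⟩
    have hKiv : K i v ≠ 0 := fun h => hai (by simp [a, h])
    constructor
    · by_contra his
      exact hKiv (by simp [hs i his, hi.symm])
    · by_contra hadj
      exact hKiv (hzero i v hi fun h => hadj h.symm)
  let K₀ := K + vecMulVec (Pi.single v 1) (Pi.single v 1) - d • vecMulVec a a
  have hKeq : K = K₀ - vecMulVec (Pi.single v 1) (Pi.single v 1) + d • vecMulVec a a := by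
    simp only [K₀]
    abel
  have hK₀ : ∀ i j, K₀ i j =
      K i j + (Pi.single v 1 : Fin n → ℝ) i * (Pi.single v 1 : Fin n → ℝ) j - d * (a i * a j) :=
    fun i j => rfl
  have hrow : K₀ v = Pi.single v 1 := by
    ext j
    have : d * a j = K v j := by rw [hsym v j]; exact mul_div_cancel₀ _ hd.ne'
    rw [hK₀, hav, Pi.single_eq_same]
    linear_combination -this
  have hsym₀ : ∀ i j, K₀ i j = K₀ j i := fun i j => by
    rw [hK₀, hK₀, hsym i j]; ring
  have hcol : K₀ᵀ v = Pi.single v 1 := by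
    rw [← hrow]; ext j; exact hsym₀ j v
  refine ⟨K₀, ⟨⟨?_, ?_⟩, ?_⟩, d, hd, a, ha, hKeq⟩
  · rw [← posDef_pivot_iff hd hav hrow hcol, ← hKeq]; exact hpd
  · intro i j hij hadj
    by_cases hi : i = v
    · subst hi; rw [hrow]; simp [hij.symm]
    by_cases hj : j = v
    · subst hj; rw [hsym₀, hrow]; simp [hij]
    rw [hK₀, hzero i j hij hadj]
    have : a i * a j = 0 := by
      by_contra h
      obtain ⟨h1, h2⟩ := mul_ne_zero_iff.1 h
      obtain ⟨his, hvi⟩ := ha.2 i hi h1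
      obtain ⟨hjs, hvj⟩ := ha.2 j hj h2
      exact hadj (hsv i his j hjs hvi hvj hij)
    simp [this, hi]
  · intro i hi
    by_cases hiv : i = v
    · subst hiv; exact hrow
    have his : i ∉ s := fun h => hi (Finset.mem_erase.2 ⟨hiv, h⟩)
    have hai : a i = 0 := by
      by_contra h
      exact his (ha.2 i hiv h).1
    ext j
    rw [hK₀, hs i his, hai]
    simp [hiv]

lemma pivot_mem_graphModelOn {s : Finset (Fin n)} {v : Fin n} (hv : v ∈ s)
    (hsv : G.IsSimplicialIn s v) {K : Matrix (Fin n) (Fin n) ℝ}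
    (hK : K ∈ graphModelOn G (s.erase v)) {d : ℝ} (hd : 0 < d) {a : Fin n → ℝ}
    (ha : a ∈ pivotVectors G s v) :
    K - vecMulVec (Pi.single v 1) (Pi.single v 1) + d • vecMulVec a a ∈ graphModelOn G s := by
  obtain ⟨⟨hpd, hzero⟩, hs⟩ := hK
  have hrow : K v = Pi.single v 1 := hs v (by simp)
  have hcol : Kᵀ v = Pi.single v 1 := by
    rw [← hrow]; ext j; exact hpd.apply_comm j v
  have hentry : ∀ i j, (K - vecMulVec (Pi.single v 1) (Pi.single v 1) + d • vecMulVec a a :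
      Matrix (Fin n) (Fin n) ℝ) i j =
      K i j - (Pi.single v 1 : Fin n → ℝ) i * (Pi.single v 1 : Fin n → ℝ) j + d * (a i * a j) :=
    fun i j => rfl
  refine ⟨⟨(posDef_pivot_iff hd ha.1 hrow hcol).2 hpd, fun i j hij hadj => ?_⟩, fun i hi => ?_⟩
  · rw [hentry, hzero i j hij hadj]
    have h1 : a i * a j = 0 := by
      by_contra h
      obtain ⟨h1, h2⟩ := mul_ne_zero_iff.1 h
      by_cases hi : i = v
      · subst hi; exact hadj (ha.2 j hij.symm h2).2
      by_cases hj : j = v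
      · subst hj; exact hadj (ha.2 i hij h1).2.symm
      obtain ⟨his, hvi⟩ := ha.2 i hi h1
      obtain ⟨hjs, hvj⟩ := ha.2 j hj h2
      exact hadj (hsv i his j hjs hvi hvj hij)
    have h2 : (Pi.single v 1 : Fin n → ℝ) i * (Pi.single v 1 : Fin n → ℝ) j = 0 := by
      by_cases hi : i = v
      · subst hi; simp [hij.symm]
      · simp [hi]
    simp [h1, h2]
  · have hiv : i ≠ v := by rintro rfl; exact hi hv
    have hai : a i = 0 := by
      by_contra h
      exact hi (ha.2 i hiv h).1
    ext j
    rw [hentry, hs i (fun h => hi (Finset.mem_of_mem_erase h)), hai]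
    simp [hiv]

/-- If every simplicial pivot problem is solvable, then the objective function attains its
minimum. -/
lemma exists_minimiser_graphModelOn (hG : IsChordal G)
    (hS : ∀ (s : Finset (Fin n)) (v : Fin n), G.IsSimplicialIn s v →
      ∃ a ∈ pivotVectors G s v, 0 < a ⬝ᵥ S *ᵥ a ∧
        ∀ b ∈ pivotVectors G s v, a ⬝ᵥ S *ᵥ a ≤ b ⬝ᵥ S *ᵥ b)
    (s : Finset (Fin n)) :
    ∃ K ∈ graphModelOn G s, ∀ K' ∈ graphModelOn G s, mlObjective S K ≤ mlObjective S K' := by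
  induction s using Finset.strongInduction with
  | H s ih =>
  rcases s.eq_empty_or_nonempty with rfl | hne
  · refine ⟨1, ⟨⟨PosDef.one, fun i j hij _ => one_apply_ne hij⟩, fun i _ => ?_⟩, ?_⟩
    · ext j; simp [one_apply, Pi.single_apply, eq_comm]
    · rintro K' ⟨-, hK'⟩
      have : K' = 1 := by
        ext i j; simp [hK' i, one_apply, Pi.single_apply, eq_comm]
      rw [this]
  obtain ⟨v, hv, hsv⟩ := hG.exists_isSimplicialIn hne
  obtain ⟨K₀, hK₀, hmin⟩ := ih _ (Finset.erase_ssubset hv)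
  obtain ⟨a, ha, hpos, hamin⟩ := hS s v hsv
  set c := a ⬝ᵥ S *ᵥ a
  have hobj : ∀ K ∈ graphModelOn G (s.erase v), ∀ d > (0 : ℝ), ∀ b ∈ pivotVectors G s v,
      mlObjective S (K - vecMulVec (Pi.single v 1) (Pi.single v 1) + d • vecMulVec b b) =
        mlObjective S K - S v v + (d * (b ⬝ᵥ S *ᵥ b) - Real.log d) := by
    intro K hK d hd b hb
    have hrow : K v = Pi.single v 1 := hK.2 v (by simp)
    refine mlObjective_pivot hd hb.1 hK.1.1 hrow ?_
    rw [← hrow]; ext j; exact hK.1.1.apply_comm j v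
  refine ⟨_, pivot_mem_graphModelOn hv hsv hK₀ (inv_pos.2 hpos) ha, fun K' hK' => ?_⟩
  obtain ⟨K₁, hK₁, d, hd, b, hb, rfl⟩ := exists_pivot_decomposition hsv hK'
  rw [hobj _ hK₀ _ (inv_pos.2 hpos) _ ha, hobj _ hK₁ _ hd _ hb, inv_mul_cancel₀ hpos.ne',
    Real.log_inv]
  have h1 := hmin K₁ hK₁
  have h2 : d * c ≤ d * (b ⬝ᵥ S *ᵥ b) := mul_le_mul_of_nonneg_left (hamin b hb) hd.le
  have h3 := Real.log_le_sub_one_of_pos (mul_pos hd hpos)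
  rw [Real.log_mul hd.ne' hpos.ne'] at h3
  linarith

lemma graphModelOn_univ : graphModelOn G Finset.univ = graphModel n G := by
  simp [graphModelOn]

end Minimiser

section Generic

variable {n d : ℕ}

/-- If `d` exceeds the number of vectors in a subfamily, almost no vector of `ℝ ^ d` is a
linear combination of them. -/
lemma ae_forall_ne_sum_smul {v : Fin n} {N : Finset (Fin n)} (hv : v ∉ N) (hN : N.card < d) :
    ∀ᵐ X : Fin n → Fin d → ℝ ∂volume, ∀ c : N → ℝ, X v ≠ ∑ i, c i • X i := by
  obtain ⟨ι⟩ : Nonempty (N ↪ Fin d) :=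
    Function.Embedding.nonempty_of_card_le (by simpa using hN.le)
  obtain ⟨j₀, hj₀⟩ : ∃ j₀, ∀ i, ι i ≠ j₀ := by
    by_contra! h
    have := Fintype.card_le_of_surjective ι h
    simp at this
    omega
  let F : (Fin n → Fin d → ℝ) → (Fin n → Fin d → ℝ) := fun X k =>
    if k = v then ∑ i : N, X v (ι i) • X i else X k
  have hF : Differentiable ℝ F := by
    rw [differentiable_pi]
    intro k
    by_cases hk : k = v
    · simp only [F, hk, if_true]
      fun_prop
    · simp only [F, hk, if_false]
      fun_prop
  let w : Fin n → Fin d → ℝ := Pi.single v (Pi.single j₀ 1)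
  have hw : w ≠ 0 := by simp [w]
  have hconst : ∀ X (t : ℝ), F (X + t • w) = F X := by
    intro X t
    ext k j
    by_cases hk : k = v
    · have h1 : ∀ i : N, (i : Fin n) ≠ v := fun i h => hv (h ▸ i.2)
      simp [F, hk, w, h1, hj₀]
    · simp [F, hk, w]
  have hdet : ∀ X, (fderiv ℝ F X).det = 0 := by
    intro X
    have h1 : fderiv ℝ F X w = 0 := by
      have h2 : HasDerivAt (fun t : ℝ => X + t • w) w 0 := by
        simpa using ((hasDerivAt_id (0 : ℝ)).smul_const w).const_add X
      have h3 : HasFDerivAt F (fderiv ℝ F X) (X + (0 : ℝ) • w) := by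
        simpa using (hF X).hasFDerivAt
      have h4 := h3.comp_hasDerivAt (0 : ℝ) h2
      have h5 : F ∘ (fun t : ℝ => X + t • w) = fun _ => F X := funext fun t => hconst X t
      rw [h5] at h4
      exact h4.unique (hasDerivAt_const _ _)
    by_contra hne
    refine hw ((LinearMap.equivOfDetNeZero _ hne).injective ?_)
    rw [map_zero]
    exact h1
  have hnull := addHaar_image_eq_zero_of_det_fderivWithin_eq_zero
    (volume : Measure (Fin n → Fin d → ℝ)) (s := Set.univ) (f := F) (f' := fderiv ℝ F)
    (fun X _ => (hF X).hasFDerivAt.hasFDerivWithinAt) (fun X _ => hdet X)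
  refine measure_mono_null (fun X hX => ?_) hnull
  simp only [Set.mem_compl_iff, Set.mem_ofPred_eq, not_forall, not_not] at hX
  obtain ⟨c, hc⟩ := hX
  refine ⟨Function.update X v (Function.extend ι c 0), trivial, ?_⟩
  ext k j
  by_cases hk : k = v
  · subst hk
    have h1 : ∀ i : N, (i : Fin n) ≠ k := fun i h => hv (h ▸ i.2)
    simp [F, h1, ι.injective.extend_apply, hc]
  · simp [F, hk]

lemma dotProduct_gram_mulVec (X : Fin n → Fin d → ℝ) (a : Fin n → ℝ) :
    a ⬝ᵥ (Matrix.of X * (Matrix.of X)ᵀ) *ᵥ a = ‖∑ i, a i • WithLp.toLp 2 (X i)‖ ^ 2 := by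
  rw [← mulVec_mulVec, dotProduct_mulVec, mulVec_transpose, EuclideanSpace.real_norm_sq_eq]
  refine Finset.sum_congr rfl fun j _ => ?_
  rw [← sq]
  simp [vecMul, dotProduct]

variable {G : SimpleGraph (Fin n)}

lemma exists_min_pivotVectors {s : Finset (Fin n)} {v : Fin n} {N : Finset (Fin n)}
    (hN : ∀ i, i ∈ N ↔ i ∈ s ∧ G.Adj v i) (X : Fin n → Fin d → ℝ)
    (hX : ∀ c : N → ℝ, X v ≠ ∑ i, c i • X i) :
    ∃ a ∈ pivotVectors G s v, 0 < a ⬝ᵥ (Matrix.of X * (Matrix.of X)ᵀ) *ᵥ a ∧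
      ∀ b ∈ pivotVectors G s v, a ⬝ᵥ (Matrix.of X * (Matrix.of X)ᵀ) *ᵥ a ≤
        b ⬝ᵥ (Matrix.of X * (Matrix.of X)ᵀ) *ᵥ b := by
  have hvN : v ∉ N := fun h => ((hN v).1 h).2.ne rfl
  let x : Fin n → EuclideanSpace ℝ (Fin d) := fun i => WithLp.toLp 2 (X i)
  let U : Submodule ℝ (EuclideanSpace ℝ (Fin d)) := Submodule.span ℝ (Set.range fun i : N => x i)
  have hsum : ∀ a ∈ pivotVectors G s v, ∑ i, a i • x i = x v + ∑ i : N, a i • x i := by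
    intro a ha
    have h0 : ∀ i ∈ Finset.univ, i ∉ insert v N → a i • x i = 0 := by
      intro i _ hi
      rw [Finset.mem_insert, not_or, hN] at hi
      rw [show a i = 0 from by_contra fun h => hi.2 (ha.2 i hi.1 h), zero_smul]
    rw [Finset.sum_coe_sort N fun i => a i • x i, ← Finset.sum_subset (Finset.subset_univ _) h0,
      Finset.sum_insert hvN, ha.1, one_smul]
  obtain ⟨c, hc⟩ := (Submodule.mem_span_range_iff_exists_fun ℝ).1 (U.starProjection_apply_mem (x v))
  let a : Fin n → ℝ := fun i => if i = v then 1 else if h : i ∈ N then - c ⟨i, h⟩ else 0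
  have ha : a ∈ pivotVectors G s v := by
    refine ⟨by simp [a], fun i hi hai => ?_⟩
    rw [← hN]
    by_contra h
    simp [a, hi, h] at hai
  have hax : ∑ i, a i • x i = x v - U.starProjection (x v) := by
    rw [hsum a ha, ← hc, sub_eq_add_neg, ← Finset.sum_neg_distrib]
    congr 1
    refine Finset.sum_congr rfl fun i _ => ?_
    have h1 : (i : Fin n) ≠ v := fun h => hvN (h ▸ i.2)
    simp [a, h1]
  refine ⟨a, ha, ?_, fun b hb => ?_⟩
  · rw [dotProduct_gram_mulVec]
    refine pow_pos (norm_pos_iff.2 ?_) 2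
    change ∑ i, a i • x i ≠ 0
    rw [hax, sub_ne_zero, ← hc]
    intro h
    refine hX c ?_
    simpa [x] using congrArg WithLp.ofLp h
  · rw [dotProduct_gram_mulVec, dotProduct_gram_mulVec]
    change ‖∑ i, a i • x i‖ ^ 2 ≤ ‖∑ i, b i • x i‖ ^ 2
    refine pow_le_pow_left₀ (norm_nonneg _) ?_ 2
    have hz : -∑ i : N, b i • x i ∈ U :=
      U.neg_mem (U.sum_mem fun i _ => U.smul_mem _ (Submodule.subset_span ⟨i, rfl⟩))
    rw [hax, hsum b hb, U.starProjection_minimal]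
    have := ciInf_le (f := fun z : U => ‖x v - z‖) ⟨0, by rintro _ ⟨z, rfl⟩; exact norm_nonneg _⟩
      ⟨_, hz⟩
    simpa using this

end Generic

section Threshold

variable {n : ℕ} {G : SimpleGraph (Fin n)}

/-- With at least as many samples as the clique number, a chordal model almost surely has a
maximum likelihood estimate. -/
lemma ae_exists_minimiser (hG : IsChordal G) {d : ℕ} (hd : G.cliqueNum ≤ d) :
    ∀ᵐ X : Fin n → Fin d → ℝ ∂volume,
      ∃ K ∈ graphModel n G, ∀ K' ∈ graphModel n G,
        mlObjective (Matrix.of X * (Matrix.of X)ᵀ) K ≤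
          mlObjective (Matrix.of X * (Matrix.of X)ᵀ) K' := by
  classical
  have hgen : ∀ᵐ X : Fin n → Fin d → ℝ ∂volume, ∀ (v : Fin n) (N : Finset (Fin n)),
      v ∉ N → N.card < d → ∀ c : N → ℝ, X v ≠ ∑ i, c i • X i := by
    simp only [ae_all_iff (ι := Fin n), ae_all_iff (ι := Finset (Fin n)),
      Filter.eventually_imp_distrib_left]
    exact fun v N hv hN => ae_forall_ne_sum_smul hv hN
  filter_upwards [hgen] with X hX
  have := exists_minimiser_graphModelOn (S := Matrix.of X * (Matrix.of X)ᵀ) hG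
    (fun s v hsv => ?_) Finset.univ
  · rwa [graphModelOn_univ] at this
  · let N := s.filter (G.Adj v)
    have hvN : v ∉ N := by simp [N]
    have hclique : G.IsClique (insert v N : Finset (Fin n)) := by
      rw [Finset.coe_insert, SimpleGraph.isClique_insert]
      refine ⟨fun x hx y hy hxy => ?_, fun y hy _ => ?_⟩
      · simp only [N, Finset.coe_filter, Set.mem_ofPred_eq] at hx hy
        exact hsv x hx.1 y hy.1 hx.2 hy.2 hxy
      · simp only [N, Finset.coe_filter, Set.mem_ofPred_eq] at hy
        exact hy.2
    have hcard := hclique.card_le_cliqueNum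
    rw [Finset.card_insert_of_notMem hvN] at hcard
    exact exists_min_pivotVectors (N := N) (by simp [N]) X (hX v N hvN (by omega))

/-- With fewer samples than the size of a clique, the maximum likelihood estimate never exists. -/
lemma not_exists_minimiser {d : ℕ} {C : Finset (Fin n)} (hC : G.IsClique C) (hd : d < C.card)
    (X : Fin n → Fin d → ℝ) :
    ¬ ∃ K ∈ graphModel n G, ∀ K' ∈ graphModel n G,
        mlObjective (Matrix.of X * (Matrix.of X)ᵀ) K ≤
          mlObjective (Matrix.of X * (Matrix.of X)ᵀ) K' := by
  rintro ⟨K, ⟨hpd, hzero⟩, hmin⟩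
  have hdep : ¬ LinearIndependent ℝ fun i : C => X i := fun h => by
    have := h.fintype_card_le_finrank
    simp at this
    omega
  obtain ⟨g, hg, i₀, hi₀⟩ := Fintype.not_linearIndependent_iff.1 hdep
  let a : Fin n → ℝ := fun i => if h : i ∈ C then g ⟨i, h⟩ else 0
  have haX : a ᵥ* Matrix.of X = 0 := by
    ext j
    have h1 := congrFun hg j
    simp only [Finset.sum_apply, Pi.smul_apply, smul_eq_mul, Pi.zero_apply] at h1
    rw [Pi.zero_apply, ← h1]
    simp only [vecMul, dotProduct, Matrix.of_apply]
    rw [← Finset.sum_subset (Finset.subset_univ C) fun i _ hi => by simp [a, hi],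
      ← Finset.sum_coe_sort C]
    simp [a]
  have ha : a ≠ 0 := fun h => hi₀ (by simpa [a] using congrFun h i₀)
  have hmem : K + vecMulVec a a ∈ graphModel n G := by
    refine ⟨hpd.add_posSemidef (by simpa using posSemidef_vecMulVec_self_star a), ?_⟩
    intro i j hij hadj
    have : a i * a j = 0 := by
      by_contra h
      obtain ⟨h1, h2⟩ := mul_ne_zero_iff.1 h
      have hi : i ∈ C := by by_contra hi; simp [a, hi] at h1
      have hj : j ∈ C := by by_contra hj; simp [a, hj] at h2
      exact hadj (hC hi hj hij)
    simp [hzero i j hij hadj, vecMulVec_apply, this]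
  have htrace : (Matrix.of X * (Matrix.of X)ᵀ * vecMulVec a a).trace = 0 := by
    rw [trace_mul_vecMulVec_self, ← mulVec_mulVec, dotProduct_mulVec, haX, zero_dotProduct]
  have hdet : K.det < (K + vecMulVec a a).det := by
    rw [vecMulVec_eq Unit, det_add_replicateCol_mul_replicateRow hpd.det_pos.ne'.isUnit,
      ← replicateRow_vecMul, det_unique (n := Unit)]
    have h1 := hpd.inv.dotProduct_mulVec_pos ha
    rw [star_trivial, dotProduct_mulVec] at h1
    rw [Matrix.add_apply, one_apply_eq, replicateRow_mul_replicateCol_apply]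
    nlinarith [mul_pos hpd.det_pos h1]
  have := hmin _ hmem
  rw [mlObjective, mlObjective, mul_add, trace_add, htrace] at this
  have := Real.log_lt_log hpd.det_pos hdet
  linarith

end Threshold

/-- For a chordal graph `G` on a nonempty vertex set, the maximum likelihood threshold
equals the clique number. -/
theorem mlt_eq_cliqueNum_of_chordal (n : ℕ) (hn : 0 < n) (G : SimpleGraph (Fin n))
    (hG : IsChordal G) :
    mlt n (graphModel n G) = G.cliqueNum := by
  have hpos : 0 < G.cliqueNum := by
    have h : G.IsClique (({⟨0, hn⟩} : Finset (Fin n)) : Set (Fin n)) := by simp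
    have h1 := h.card_le_cliqueNum
    rwa [Finset.card_singleton] at h1
  refine IsLeast.csInf_eq ⟨⟨hpos, ae_exists_minimiser hG le_rfl⟩, ?_⟩
  rintro d ⟨-, hd⟩
  by_contra! hlt
  obtain ⟨C, hC⟩ := G.exists_isNClique_cliqueNum
  obtain ⟨X, hX⟩ := hd.exists
  exact not_exists_minimiser hC.isClique (hC.card_eq ▸ hlt) X hX
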